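/- In the finite pool-based AL model, let b > 0 and n be a positive integer with |𝒯| ≤ e^{b·n}, let ε ∈ [0,1], and suppose the data selection strategy satisfies P[𝖽(W,H) > d] ≤ ε. Then for every γ ≥ 0, ε ≥ P[ j(W,U,H) ≥ b·n + γ ] − e^{−γ}; consequently, ε ≥ sup_{γ ≥ 0} ( P[ j(W,U,H) ≥ b·n + γ ] − e^{−γ} ). -/

import Mathlib

open scoped BigOperators

/-!
If the tilted information is at least `R > 0` and the distortion is at most `d`, then the
information density `log (Q(U|H) / P_U(U))` is itself at least `R`. Bounding `P_{T|U} ≤ 1` makes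
`U` independent of `(T, H)` and replaces the law of `T` by the counting measure; for each fixed `h`,
a change of measure from `P_U` to `Q(·|h)` shows that this last event has probability at most
`exp (-R)`. Hence `P[j ≥ R] ≤ P[𝖽 > d] + |𝒯| exp (-R)`, and `R = b n + γ` gives the converse.
-/

section ChangeOfMeasure

theorem mul_exp_le_of_le_log_div {p q R : ℝ} (hp : 0 ≤ p) (hq : 0 ≤ q) (hR : 0 < R)
    (h : R ≤ Real.log (q / p)) : p * Real.exp R ≤ q := by
  obtain rfl | hp := hp.eq_or_lt
  · simpa using hq
  have one_lt_ratio : 1 < q / p := (Real.log_pos_iff (by positivity)).1 (hR.trans_le h)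
  have exp_le_ratio : Real.exp R ≤ q / p := (Real.le_log_iff_exp_le (by linarith)).1 h
  exact (le_div_iff₀' hp).1 exp_le_ratio

theorem sum_filter_le_log_div_le {ι : Type*} (s : Finset ι) {p q : ι → ℝ}
    (hp : ∀ i ∈ s, 0 ≤ p i) (hq : ∀ i ∈ s, 0 ≤ q i) {R : ℝ} (hR : 0 < R) :
    ∑ i ∈ s with R ≤ Real.log (q i / p i), p i ≤ Real.exp (-R) * ∑ i ∈ s, q i := by
  calc ∑ i ∈ s with R ≤ Real.log (q i / p i), p i
      ≤ ∑ i ∈ s with R ≤ Real.log (q i / p i), Real.exp (-R) * q i := by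
        refine Finset.sum_le_sum fun i hi => ?_
        obtain ⟨his, hlog⟩ := Finset.mem_filter.1 hi
        rw [Real.exp_neg, le_inv_mul_iff₀' (Real.exp_pos R)]
        exact mul_exp_le_of_le_log_div (hp i his) (hq i his) hR hlog
    _ ≤ ∑ i ∈ s, Real.exp (-R) * q i :=
        Finset.sum_le_sum_of_subset_of_nonneg (Finset.filter_subset _ s)
          fun i hi _ => mul_nonneg (Real.exp_pos _).le (hq i hi)
    _ = Real.exp (-R) * ∑ i ∈ s, q i := by rw [Finset.mul_sum]

end ChangeOfMeasure

section ActiveLearning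

variable {𝒲 𝒰 𝒯 ℋ : Type*} [Fintype 𝒲]

/-- The marginal `P_U` of the pool, for the law `PW` of `W` and the kernel `PU` from `W` to `U`. -/
def poolMarginal (PW : 𝒲 → ℝ) (PU : 𝒲 → 𝒰 → ℝ) (u : 𝒰) : ℝ :=
  ∑ w, PW w * PU w u

theorem poolMarginal_nonneg {PW : 𝒲 → ℝ} {PU : 𝒲 → 𝒰 → ℝ} (hPW : ∀ w, 0 ≤ PW w)
    (hPU : ∀ w u, 0 ≤ PU w u) (u : 𝒰) : 0 ≤ poolMarginal PW PU u :=
  Finset.sum_nonneg fun w _ => mul_nonneg (hPW w) (hPU w u)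

/-- The tilted information `j(w, u, h)` of a kernel `Q` from hypotheses to pools. As `x / 0 = 0` and
`log 0 = 0`, the logarithmic term is `0` where `P_U` or `Q` vanishes. -/
noncomputable def tiltedInfo (PW : 𝒲 → ℝ) (PU : 𝒲 → 𝒰 → ℝ) (Q : ℋ → 𝒰 → ℝ)
    (dst : 𝒲 → ℋ → ℝ) (lam d : ℝ) (w : 𝒲) (u : 𝒰) (h : ℋ) : ℝ :=
  Real.log (Q h u / poolMarginal PW PU u) + lam * (dst w h - d)

variable [Fintype 𝒰] [Fintype 𝒯] [Fintype ℋ]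

/-- The probability of the event `E` under the joint law of the Markov chain `W → U → T → H` with
initial law `PW` and transition kernels `PU`, `PT`, `PH`. -/
def chainProb (PW : 𝒲 → ℝ) (PU : 𝒲 → 𝒰 → ℝ) (PT : 𝒰 → 𝒯 → ℝ) (PH : 𝒯 → ℋ → ℝ)
    (E : 𝒲 → 𝒰 → 𝒯 → ℋ → Prop) [∀ w u t h, Decidable (E w u t h)] : ℝ :=
  ∑ w, ∑ u, ∑ t, ∑ h, if E w u t h then PW w * PU w u * PT u t * PH t h else 0

variable {PW : 𝒲 → ℝ} {PU : 𝒲 → 𝒰 → ℝ} {PT : 𝒰 → 𝒯 → ℝ} {PH : 𝒯 → ℋ → ℝ}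

theorem chainProb_le_add (hPW : ∀ w, 0 ≤ PW w) (hPU : ∀ w u, 0 ≤ PU w u)
    (hPT : ∀ u t, 0 ≤ PT u t) (hPH : ∀ t h, 0 ≤ PH t h) {E F G : 𝒲 → 𝒰 → 𝒯 → ℋ → Prop}
    [∀ w u t h, Decidable (E w u t h)] [∀ w u t h, Decidable (F w u t h)]
    [∀ w u t h, Decidable (G w u t h)] (hE : ∀ w u t h, E w u t h → F w u t h ∨ G w u t h) :
    chainProb PW PU PT PH E ≤ chainProb PW PU PT PH F + chainProb PW PU PT PH G := by
  simp only [chainProb, ← Finset.sum_add_distrib]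
  gcongr with w _ u _ t _ h
  have law_nonneg : 0 ≤ PW w * PU w u * PT u t * PH t h :=
    mul_nonneg (mul_nonneg (mul_nonneg (hPW w) (hPU w u)) (hPT u t)) (hPH t h)
  have := hE w u t h
  split_ifs <;> first | linarith | tauto

theorem chainProb_eq_sum_poolMarginal (E : 𝒰 → ℋ → Prop) [∀ u h, Decidable (E u h)] :
    chainProb PW PU PT PH (fun _ u _ h => E u h) =
      ∑ t, ∑ h, PH t h * ∑ u with E u h, poolMarginal PW PU u * PT u t := by
  calc chainProb PW PU PT PH (fun _ u _ h => E u h)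
      = ∑ u, ∑ t, ∑ h, ∑ w, if E u h then PW w * PU w u * PT u t * PH t h else 0 := by
        simp only [chainProb, Finset.sum_comm (s := (Finset.univ : Finset 𝒲))]
    _ = ∑ t, ∑ h, ∑ u, ∑ w, if E u h then PW w * PU w u * PT u t * PH t h else 0 := by
        simp only [Finset.sum_comm (s := (Finset.univ : Finset 𝒰))]
    _ = ∑ t, ∑ h, PH t h * ∑ u with E u h, poolMarginal PW PU u * PT u t := by
        refine Finset.sum_congr rfl fun t _ => Finset.sum_congr rfl fun h _ => ?_
        rw [Finset.sum_filter, Finset.mul_sum]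
        refine Finset.sum_congr rfl fun u _ => ?_
        split_ifs
        · rw [← Finset.sum_mul, ← Finset.sum_mul, poolMarginal, mul_comm]
        · simp

theorem chainProb_le_log_div_poolMarginal_le (hPW : ∀ w, 0 ≤ PW w) (hPU : ∀ w u, 0 ≤ PU w u)
    (hPT : ∀ u t, PT u t ≤ 1) (hPH0 : ∀ t h, 0 ≤ PH t h) (hPH1 : ∀ t, ∑ h, PH t h = 1)
    {Q : ℋ → 𝒰 → ℝ} (hQ0 : ∀ h u, 0 ≤ Q h u) (hQ1 : ∀ h, ∑ u, Q h u = 1)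
    {R : ℝ} (hR : 0 < R) :
    chainProb PW PU PT PH (fun _ u _ h => R ≤ Real.log (Q h u / poolMarginal PW PU u)) ≤
      Fintype.card 𝒯 * Real.exp (-R) := by
  have marginal_nonneg := poolMarginal_nonneg hPW hPU
  calc chainProb PW PU PT PH (fun _ u _ h => R ≤ Real.log (Q h u / poolMarginal PW PU u))
      = ∑ t, ∑ h, PH t h * ∑ u with R ≤ Real.log (Q h u / poolMarginal PW PU u),
          poolMarginal PW PU u * PT u t := chainProb_eq_sum_poolMarginal _
    _ ≤ ∑ t, ∑ h, PH t h * ∑ u with R ≤ Real.log (Q h u / poolMarginal PW PU u),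
          poolMarginal PW PU u := by
        gcongr with t _ h _ u
        · exact hPH0 t h
        · exact mul_le_of_le_one_right (marginal_nonneg u) (hPT u t)
    _ ≤ ∑ t, ∑ h, PH t h * Real.exp (-R) := by
        gcongr with t _ h
        · exact hPH0 t h
        · simpa [hQ1] using sum_filter_le_log_div_le Finset.univ
            (fun u _ => marginal_nonneg u) (fun u _ => hQ0 h u) hR
    _ = Fintype.card 𝒯 * Real.exp (-R) := by
        simp [← Finset.sum_mul, hPH1]

theorem chainProb_le_tiltedInfo_le (hPW : ∀ w, 0 ≤ PW w) (hPU : ∀ w u, 0 ≤ PU w u)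
    (hPT0 : ∀ u t, 0 ≤ PT u t) (hPT1 : ∀ u, ∑ t, PT u t = 1)
    (hPH0 : ∀ t h, 0 ≤ PH t h) (hPH1 : ∀ t, ∑ h, PH t h = 1)
    (dst : 𝒲 → ℋ → ℝ) (d : ℝ) {lam : ℝ} (hlam : 0 ≤ lam)
    {Q : ℋ → 𝒰 → ℝ} (hQ0 : ∀ h u, 0 ≤ Q h u) (hQ1 : ∀ h, ∑ u, Q h u = 1)
    {R : ℝ} (hR : 0 < R) :
    chainProb PW PU PT PH (fun w u _ h => R ≤ tiltedInfo PW PU Q dst lam d w u h) ≤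
      chainProb PW PU PT PH (fun w _ _ h => d < dst w h) +
        Fintype.card 𝒯 * Real.exp (-R) := by
  have event_subset (w : 𝒲) (u : 𝒰) (_ : 𝒯) (h : ℋ)
      (hj : R ≤ tiltedInfo PW PU Q dst lam d w u h) :
      d < dst w h ∨ R ≤ Real.log (Q h u / poolMarginal PW PU u) := by
    refine or_iff_not_imp_left.2 fun hd => hj.trans (add_le_of_nonpos_right ?_)
    exact mul_nonpos_of_nonneg_of_nonpos hlam (sub_nonpos.2 (not_lt.1 hd))
  have selection_le_one (u : 𝒰) (t : 𝒯) : PT u t ≤ 1 :=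
    (Finset.single_le_sum (fun t' _ => hPT0 u t') (Finset.mem_univ t)).trans_eq (hPT1 u)
  exact (chainProb_le_add hPW hPU hPT0 hPH0 event_subset).trans <| by
    gcongr
    exact chainProb_le_log_div_poolMarginal_le hPW hPU selection_le_one hPH0 hPH1 hQ0 hQ1 hR

end ActiveLearning

/-- **Converse bound on the excess-distortion probability in finite pool-based AL**
(Theorem 1 of the paper).

Finite pool-based active-learning model: finite nonempty types `𝒲` (sub-distributions),
`𝒰` (pools), `𝒯` (training datasets), `ℋ` (hypotheses); a pmf `PW` on `𝒲`; Markov kernels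
`PU` (pool observation), `PT` (data selection) and `PH` (learning); the joint law of
`(W,U,T,H)` is `PW w * PU w u * PT u t * PH t h`.  `dst` is a nonnegative distortion
measure, `d ≥ 0` a distortion level, and the tilted information is
`j(w,u,h) = log (Q h u / P_U u) + lam * (dst w h - d)` for a kernel `Q : ℋ → 𝒰` and
`lam ≥ 0`, where `P_U u = ∑ w, PW w * PU w u` is the marginal of `U`.

If `|𝒯| ≤ exp (b*n)` and `P[dst (W,H) > d] ≤ ε`, then for every `γ ≥ 0`,
`ε ≥ P[ j(W,U,H) ≥ b*n + γ ] - exp (-γ)`, and consequently `ε` dominates the supremum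
of this expression over `γ ≥ 0`. -/
theorem excess_distortion_converse
    {𝒲 𝒰 𝒯 ℋ : Type*} [Fintype 𝒲] [Nonempty 𝒲] [Fintype 𝒰] [Nonempty 𝒰]
    [Fintype 𝒯] [Nonempty 𝒯] [Fintype ℋ] [Nonempty ℋ]
    (PW : 𝒲 → ℝ) (hPW0 : ∀ w, 0 ≤ PW w) (hPW1 : ∑ w, PW w = 1)
    (PU : 𝒲 → 𝒰 → ℝ) (hPU0 : ∀ w u, 0 ≤ PU w u) (hPU1 : ∀ w, ∑ u, PU w u = 1)
    (PT : 𝒰 → 𝒯 → ℝ) (hPT0 : ∀ u t, 0 ≤ PT u t) (hPT1 : ∀ u, ∑ t, PT u t = 1)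
    (PH : 𝒯 → ℋ → ℝ) (hPH0 : ∀ t h, 0 ≤ PH t h) (hPH1 : ∀ t, ∑ h, PH t h = 1)
    (dst : 𝒲 → ℋ → ℝ) (hdst : ∀ w h, 0 ≤ dst w h) (d : ℝ) (hd : 0 ≤ d)
    (lam : ℝ) (hlam : 0 ≤ lam)
    (Q : ℋ → 𝒰 → ℝ) (hQ0 : ∀ h u, 0 ≤ Q h u) (hQ1 : ∀ h, ∑ u, Q h u = 1)
    (b : ℝ) (hb : 0 < b) (n : ℕ) (hn : 0 < n)
    (hcard : (Fintype.card 𝒯 : ℝ) ≤ Real.exp (b * n))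
    (ε : ℝ) (hε0 : 0 ≤ ε) (hε1 : ε ≤ 1)
    (hexcess : (∑ w, ∑ u, ∑ t, ∑ h,
        if d < dst w h then PW w * PU w u * PT u t * PH t h else 0) ≤ ε) :
    (∀ γ : ℝ, 0 ≤ γ →
      (∑ w, ∑ u, ∑ t, ∑ h,
        if b * n + γ ≤ Real.log (Q h u / ∑ w', PW w' * PU w' u) + lam * (dst w h - d)
        then PW w * PU w u * PT u t * PH t h else 0) - Real.exp (-γ) ≤ ε)
    ∧ (⨆ γ : {x : ℝ // 0 ≤ x},
        ((∑ w, ∑ u, ∑ t, ∑ h,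
          if b * n + γ.1 ≤ Real.log (Q h u / ∑ w', PW w' * PU w' u) + lam * (dst w h - d)
          then PW w * PU w u * PT u t * PH t h else 0) - Real.exp (-γ.1))) ≤ ε := by
  have bound (γ : ℝ) (hγ : 0 ≤ γ) :
      chainProb PW PU PT PH (fun w u _ h => b * n + γ ≤ tiltedInfo PW PU Q dst lam d w u h) -
        Real.exp (-γ) ≤ ε := by
    have tail := chainProb_le_tiltedInfo_le hPW0 hPU0 hPT0 hPT1 hPH0 hPH1 dst d hlam hQ0 hQ1
      (show 0 < b * n + γ by positivity)
    have card_mul_exp_le : Fintype.card 𝒯 * Real.exp (-(b * n + γ)) ≤ Real.exp (-γ) := by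
      calc Fintype.card 𝒯 * Real.exp (-(b * n + γ))
          ≤ Real.exp (b * n) * Real.exp (-(b * n + γ)) := by gcongr
        _ = Real.exp (-γ) := by rw [← Real.exp_add]; congr 1; ring
    have excess : chainProb PW PU PT PH (fun w _ _ h => d < dst w h) ≤ ε := hexcess
    linarith
  have : Nonempty {x : ℝ // 0 ≤ x} := ⟨⟨0, le_rfl⟩⟩
  exact ⟨bound, ciSup_le fun γ => bound γ.1 γ.2⟩
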